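/- Let B₁, B₂ be real-valued functions on the primes with B₁(p), B₂(p) ∈ [−1,1] for all primes p, satisfying the pair Sato-Tate equidistribution hypothesis: for all closed intervals I₁, I₂ ⊆ [−1,1], the set {p prime : B₁(p) ∈ I₁ and B₂(p) ∈ I₂} has natural density μ_ST(I₁)·μ_ST(I₂). Define cᵢ(p) = (1 − 2√p·Bᵢ(p))/p for i = 1,2. Then both the set {p prime : c₁(p)·c₂(p) ≤ 0} and the set {p prime : c₁(p)·c₂(p) ≥ 0} have natural density 1/2. -/

import Mathlib

/-!
Since `cᵢ(p) > 0` exactly when `Bᵢ(p) < 1 / (2√p)`, and this threshold is positive and tends to `0`,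
the sign of `cᵢ(p)` is essentially that of `-Bᵢ(p)`. For fixed `ε > 0` and all large `p`, one has
`cᵢ(p) > 0` when `Bᵢ(p) ∈ [-1, 0]` (`exponent_pos`) and `cᵢ(p) < 0` when `Bᵢ(p) ∈ [ε, 1]`
(`exponent_neg`). With `m = μ_ST([ε, 1]) ≥ 1/2 - ε` (`le_muST`), the pair Sato-Tate hypothesis on the
four boxes built from these intervals shows that `{c₁c₂ < 0}` has lower density at least `m`, and
`{c₁c₂ > 0}` at least `1/4 + m²` (`eventually_lt_ratio`). Letting `ε → 0`, both lower densities are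
at least `1/2`. As the two sets are disjoint, this forces density `1/2` for any set lying between
one of them and the complement of the other (`hasPrimeDensity_half`).
-/

open scoped Classical
open Filter

/-- The prime counting function `π(x)`: the number of primes `≤ x`. -/
noncomputable def primePi (x : ℕ) : ℕ := ((Finset.range (x + 1)).filter Nat.Prime).card

/-- The number of primes `p ≤ x` lying in the set `S`. -/
noncomputable def primeCount (S : Set ℕ) (x : ℕ) : ℕ :=
  ((Finset.range (x + 1)).filter (fun p => p.Prime ∧ p ∈ S)).card

/-- A set `S` of primes has natural density `δ` if `#{p ∈ S : p ≤ x}/π(x) → δ`. -/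
def HasPrimeDensity (S : Set ℕ) (δ : ℝ) : Prop :=
  Filter.Tendsto (fun x : ℕ => (primeCount S x : ℝ) / (primePi x : ℝ)) Filter.atTop (nhds δ)

/-- The Sato–Tate measure of the interval `[a,b]`: `(2/π)∫_a^b √(1-t²) dt`. -/
noncomputable def muST (a b : ℝ) : ℝ := (2 / Real.pi) * ∫ t in a..b, Real.sqrt (1 - t ^ 2)

theorem primePi_tendsto : Tendsto (fun x : ℕ => (primePi x : ℝ)) atTop atTop := by
  have h : (fun x : ℕ => primePi x) = Nat.primeCounting := by
    funext x
    simp [primePi, Nat.primeCounting, Nat.primeCounting', Nat.count_eq_card_filter_range]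
  have h' : Tendsto (fun x : ℕ => primePi x) atTop atTop := by
    rw [h]
    exact Nat.tendsto_primeCounting
  exact tendsto_natCast_atTop_atTop.comp h'

theorem muST_neg_one_zero : muST (-1) 0 = 1 / 2 ∧ muST 0 1 = 1 / 2 := by
  have hii : ∀ a b : ℝ, IntervalIntegrable (fun t : ℝ => √(1 - t ^ 2)) MeasureTheory.volume a b :=
    fun a b => (by fun_prop : Continuous fun t : ℝ => √(1 - t ^ 2)).intervalIntegrable a b
  have hsum := intervalIntegral.integral_add_adjacent_intervals (hii (-1) 0) (hii 0 1)
  have hsymm : ∫ t in (-1 : ℝ)..0, √(1 - t ^ 2) = ∫ t in (0 : ℝ)..1, √(1 - t ^ 2) := by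
    have := intervalIntegral.integral_comp_neg (a := 0) (b := 1) (fun t : ℝ => √(1 - t ^ 2))
    simpa using this.symm
  rw [integral_sqrt_one_sub_sq] at hsum
  have hpi := Real.pi_pos
  constructor
  · rw [muST, show ∫ t in (-1 : ℝ)..0, √(1 - t ^ 2) = Real.pi / 4 by linarith]
    field_simp; norm_num
  · rw [muST, show ∫ t in (0 : ℝ)..1, √(1 - t ^ 2) = Real.pi / 4 by linarith]
    field_simp; norm_num

theorem le_muST {ε : ℝ} (h0 : 0 ≤ ε) : 1 / 2 - ε ≤ muST ε 1 := by
  have hcont : Continuous fun t : ℝ => √(1 - t ^ 2) := by fun_prop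
  have hsum := intervalIntegral.integral_add_adjacent_intervals
    (hcont.intervalIntegrable (μ := MeasureTheory.volume) 0 ε) (hcont.intervalIntegrable ε 1)
  have hle : ∫ t in (0 : ℝ)..ε, √(1 - t ^ 2) ≤ ∫ _ in (0 : ℝ)..ε, (1 : ℝ) := by
    refine intervalIntegral.integral_mono_on h0 (hcont.intervalIntegrable 0 ε)
      intervalIntegrable_const fun t _ => ?_
    exact Real.sqrt_le_one.2 (by nlinarith [sq_nonneg t])
  rw [intervalIntegral.integral_const, smul_eq_mul] at hle
  have htot := muST_neg_one_zero.2
  unfold muST at htot ⊢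
  rw [← hsum, mul_add] at htot
  have hpi : 2 / Real.pi ≤ 1 := (div_le_one Real.pi_pos).2 Real.two_le_pi
  have hpi0 : 0 ≤ 2 / Real.pi := by positivity
  have : 2 / Real.pi * ∫ t in (0 : ℝ)..ε, √(1 - t ^ 2) ≤ ε :=
    (mul_le_mul_of_nonneg_left hle hpi0).trans (by nlinarith)
  linarith

/-- If two disjoint sets with densities `d₁`, `d₂` are contained in `T` up to finitely many primes,
then the lower density of `T` is at least `d₁ + d₂`. -/
theorem eventually_lt_ratio {S₁ S₂ T : Set ℕ} {d₁ d₂ r : ℝ} {M : ℕ}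
    (h₁ : HasPrimeDensity S₁ d₁) (h₂ : HasPrimeDensity S₂ d₂) (hd : Disjoint S₁ S₂)
    (hT : ∀ p : ℕ, p.Prime → M ≤ p → p ∈ S₁ ∪ S₂ → p ∈ T) (hr : r < d₁ + d₂) :
    ∀ᶠ x : ℕ in atTop, r < (primeCount T x : ℝ) / primePi x := by
  have hcard : ∀ x, primeCount S₁ x + primeCount S₂ x ≤ primeCount T x + M := by
    intro x
    unfold primeCount
    rw [← Finset.card_union_of_disjoint]
    · refine (Finset.card_le_card 
        (t := (Finset.range (x + 1)).filter (fun p => p.Prime ∧ p ∈ T) ∪ Finset.range M) ?_).trans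
        ((Finset.card_union_le _ _).trans (by rw [Finset.card_range]))
      intro p hp
      simp only [Finset.mem_union, Finset.mem_filter, Finset.mem_range] at hp ⊢
      by_cases hM : p < M
      · exact Or.inr hM
      · rcases hp with ⟨hx, hp, hS⟩ | ⟨hx, hp, hS⟩
        · exact Or.inl ⟨hx, hp, hT p hp (not_lt.1 hM) (Or.inl hS)⟩
        · exact Or.inl ⟨hx, hp, hT p hp (not_lt.1 hM) (Or.inr hS)⟩
    · rw [Finset.disjoint_left]
      intro p hp hp'
      exact Set.disjoint_left.1 hd (Finset.mem_filter.1 hp).2.2 (Finset.mem_filter.1 hp').2.2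
  have hlim := (h₁.add h₂).sub (primePi_tendsto.const_div_atTop (M : ℝ))
  rw [sub_zero] at hlim
  filter_upwards [hlim.eventually_const_lt hr] with x hx
  refine hx.trans_le ?_
  rw [← add_div, ← sub_div]
  have := hcard x
  gcongr
  rw [sub_le_iff_le_add]
  exact_mod_cast this

theorem ratio_mono {S T : Set ℕ} (h : S ⊆ T) (x : ℕ) :
    (primeCount S x : ℝ) / primePi x ≤ (primeCount T x : ℝ) / primePi x := by
  have : primeCount S x ≤ primeCount T x :=
    Finset.card_le_card (Finset.monotone_filter_right _ fun p _ hp => ⟨hp.1, h hp.2⟩)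
  gcongr

theorem ratio_add_le_one {S T : Set ℕ} (h : Disjoint S T) (x : ℕ) :
    (primeCount S x : ℝ) / primePi x + (primeCount T x : ℝ) / primePi x ≤ 1 := by
  rw [← add_div]
  refine div_le_one_of_le₀ ?_ (Nat.cast_nonneg _)
  norm_cast
  unfold primeCount primePi
  rw [← Finset.card_union_of_disjoint]
  · refine Finset.card_le_card fun p hp => ?_
    simp only [Finset.mem_union, Finset.mem_filter] at hp ⊢
    tauto
  · rw [Finset.disjoint_left]
    intro p hp hp'
    exact Set.disjoint_left.1 h (Finset.mem_filter.1 hp).2.2 (Finset.mem_filter.1 hp').2.2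

/-- A set has density `1/2` if it contains a set of lower density at least `1/2` and is disjoint
from another such set. -/
theorem hasPrimeDensity_half {N P T : Set ℕ} (hNT : N ⊆ T) (hTP : Disjoint T P)
    (hN : ∀ r < (1 / 2 : ℝ), ∀ᶠ x : ℕ in atTop, r < (primeCount N x : ℝ) / primePi x)
    (hP : ∀ r < (1 / 2 : ℝ), ∀ᶠ x : ℕ in atTop, r < (primeCount P x : ℝ) / primePi x) :
    HasPrimeDensity T (1 / 2) := by
  refine tendsto_order.2 ⟨fun r hr => ?_, fun r hr => ?_⟩
  · filter_upwards [hN r hr] with x hx using hx.trans_le (ratio_mono hNT x)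
  · filter_upwards [hP (1 - r) (by linarith)] with x hx
    linarith [ratio_add_le_one hTP x]

theorem exponent_pos {p : ℕ} (hp : p.Prime) {b : ℝ} (hb : b ≤ 0) :
    0 < (1 - 2 * √(p : ℝ) * b) / p := by
  have hp0 : (0 : ℝ) < p := by exact_mod_cast hp.pos
  have : 0 ≤ √(p : ℝ) * (-b) := mul_nonneg (Real.sqrt_nonneg _) (by linarith)
  exact div_pos (by linarith) hp0

/-- The exponent is negative once `B(p) ≥ ε` and `p ≥ 1 / ε²`: then `√p · B(p) ≥ 1`. -/
theorem exponent_neg {p : ℕ} (hp : p.Prime) {ε b : ℝ} (hε : 0 < ε) (hM : (1 / ε) ^ 2 ≤ p)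
    (hb : ε ≤ b) : (1 - 2 * √(p : ℝ) * b) / p < 0 := by
  have hp0 : (0 : ℝ) < p := by exact_mod_cast hp.pos
  have h1 : 1 / ε ≤ √(p : ℝ) := Real.le_sqrt_of_sq_le hM
  have h2 : 1 ≤ √(p : ℝ) * b := calc
    1 = 1 / ε * ε := by field_simp
    _ ≤ √(p : ℝ) * b := by gcongr
  exact div_neg_of_neg_of_pos (by linarith) hp0

theorem stmt_5 (B₁ B₂ c₁ c₂ : ℕ → ℝ)
    (hB₁ : ∀ p : ℕ, p.Prime → B₁ p ∈ Set.Icc (-1 : ℝ) 1)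
    (hB₂ : ∀ p : ℕ, p.Prime → B₂ p ∈ Set.Icc (-1 : ℝ) 1)
    (hST : ∀ a₁ b₁ a₂ b₂ : ℝ, -1 ≤ a₁ → a₁ ≤ b₁ → b₁ ≤ 1 → -1 ≤ a₂ → a₂ ≤ b₂ → b₂ ≤ 1 →
      HasPrimeDensity {p | B₁ p ∈ Set.Icc a₁ b₁ ∧ B₂ p ∈ Set.Icc a₂ b₂}
        (muST a₁ b₁ * muST a₂ b₂))
    (hc₁ : ∀ p : ℕ, p.Prime → c₁ p = (1 - 2 * Real.sqrt p * B₁ p) / p)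
    (hc₂ : ∀ p : ℕ, p.Prime → c₂ p = (1 - 2 * Real.sqrt p * B₂ p) / p) :
    HasPrimeDensity {p | c₁ p * c₂ p ≤ 0} (1 / 2) ∧
      HasPrimeDensity {p | 0 ≤ c₁ p * c₂ p} (1 / 2) := by
  have hneg : ∀ r < (1 / 2 : ℝ), ∀ᶠ x : ℕ in atTop,
      r < (primeCount {p | c₁ p * c₂ p < 0} x : ℝ) / primePi x := by
    intro r hr
    obtain ⟨ε, hε, hε'⟩ := exists_between (show 0 < min (1 / 2 - r) (1 / 2) by
      rw [lt_min_iff]; constructor <;> linarith)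
    obtain ⟨hεr, hε2⟩ := lt_min_iff.1 hε'
    obtain ⟨M, hM⟩ := exists_nat_ge ((1 / ε) ^ 2)
    have hm := le_muST hε.le
    have hhalf := muST_neg_one_zero.1
    refine eventually_lt_ratio (M := M)
      (hST (-1) 0 ε 1 le_rfl (by norm_num) (by norm_num) (by linarith) (by linarith) le_rfl)
      (hST ε 1 (-1) 0 (by linarith) (by linarith) le_rfl le_rfl (by norm_num) (by norm_num))
      ?_ ?_ ?_
    · rw [Set.disjoint_left]
      rintro p ⟨h1, -⟩ ⟨h2, -⟩
      linarith [h1.2, h2.1]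
    · intro p hp hMp h
      have hMp' : (1 / ε) ^ 2 ≤ (p : ℝ) := hM.trans (by exact_mod_cast hMp)
      rw [Set.mem_ofPred_eq, hc₁ p hp, hc₂ p hp]
      rcases h with ⟨h1, h2⟩ | ⟨h1, h2⟩
      · exact mul_neg_of_pos_of_neg (exponent_pos hp h1.2) (exponent_neg hp hε hMp' h2.1)
      · exact mul_neg_of_neg_of_pos (exponent_neg hp hε hMp' h1.1) (exponent_pos hp h2.2)
    · rw [hhalf]; linarith
  have hpos : ∀ r < (1 / 2 : ℝ), ∀ᶠ x : ℕ in atTop,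
      r < (primeCount {p | 0 < c₁ p * c₂ p} x : ℝ) / primePi x := by
    intro r hr
    obtain ⟨ε, hε, hε'⟩ := exists_between (show 0 < min (1 / 2 - r) (1 / 2) by
      rw [lt_min_iff]; constructor <;> linarith)
    obtain ⟨hεr, hε2⟩ := lt_min_iff.1 hε'
    obtain ⟨M, hM⟩ := exists_nat_ge ((1 / ε) ^ 2)
    have hm := le_muST hε.le
    have hhalf := muST_neg_one_zero.1
    refine eventually_lt_ratio (M := M)
      (hST (-1) 0 (-1) 0 le_rfl (by norm_num) (by norm_num) le_rfl (by norm_num) (by norm_num))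
      (hST ε 1 ε 1 (by linarith) (by linarith) le_rfl (by linarith) (by linarith) le_rfl)
      ?_ ?_ ?_
    · rw [Set.disjoint_left]
      rintro p ⟨h1, -⟩ ⟨h2, -⟩
      linarith [h1.2, h2.1]
    · intro p hp hMp h
      have hMp' : (1 / ε) ^ 2 ≤ (p : ℝ) := hM.trans (by exact_mod_cast hMp)
      rw [Set.mem_ofPred_eq, hc₁ p hp, hc₂ p hp]
      rcases h with ⟨h1, h2⟩ | ⟨h1, h2⟩
      · exact mul_pos (exponent_pos hp h1.2) (exponent_pos hp h2.2)
      · exact mul_pos_of_neg_of_neg (exponent_neg hp hε hMp' h1.1) (exponent_neg hp hε hMp' h2.1)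
    · rw [hhalf]
      -- `1/4 + m² ≥ m` for every `m`, because `(m - 1/2)² ≥ 0`.
      nlinarith [sq_nonneg (muST ε 1 - 1 / 2)]
  constructor
  · refine hasPrimeDensity_half ?_ ?_ hneg hpos
    · intro p hp
      rw [Set.mem_ofPred_eq] at hp ⊢
      exact hp.le
    · rw [Set.disjoint_left]
      intro p hp hp'
      rw [Set.mem_ofPred_eq] at hp hp'
      linarith
  · refine hasPrimeDensity_half ?_ ?_ hpos hneg
    · intro p hp
      rw [Set.mem_ofPred_eq] at hp ⊢
      exact hp.le
    · rw [Set.disjoint_left]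
      intro p hp hp'
      rw [Set.mem_ofPred_eq] at hp hp'
      linarith
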